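/- arXiv:2605.20895 — 2 statements merged into one kernel-verified Lean document; each statement's English description precedes it below -/
import Mathlib

section
/- Let σ > 1 and let f: ℝ → ℝ be 1-periodic and α-Hölder continuous for some 0 < α ≤ 1. Then there exist constants B, B* > 0 depending only on σ, f, α such that for every positive integer i: (1) for all positive integers k, | f(0)/(π^σ W_{i,k}^σ) · f(w_+*(i)φ^{−k})/sin(π w_+*(i) φ^{−k})^σ − f(0)² 5^{σ/2}/(π^{2σ} η_i^σ) | ≤ B / (φ^{αk} i^σ); and (2) for all positive integers j, | f(w_+(i)φ^{−(μ_i+j)})/sin(π w_+(i) φ^{−(μ_i+j)})^σ · f(0)/(π^σ (W*_{i,μ_i+j})^σ) − f(0)² 5^{σ/2}/(π^{2σ} η_i^σ) | ≤ B* / (φ^{α(μ_i+j)} i^{σ−α}). -/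
open Real

noncomputable def phi : ℝ := (1 + Real.sqrt 5) / 2

noncomputable def W (i : ℕ) : ℕ → ℤ
  | 0 => ⌊phi ^ 2 * (⌊phi * i⌋ : ℝ)⌋ - ⌊phi * (⌊phi * i⌋ : ℝ)⌋
  | 1 => ⌊phi * (⌊phi * i⌋ : ℝ)⌋
  | 2 => ⌊phi ^ 2 * (⌊phi * i⌋ : ℝ)⌋
  | (k + 3) => W i (k + 2) + W i (k + 1)

noncomputable def wplus (i : ℕ) : ℝ := phi⁻¹ ^ 2 * (W i 1 : ℝ) + phi⁻¹ * (W i 2 : ℝ)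

noncomputable def wminus (i : ℕ) : ℝ := phi ^ 2 * (W i 1 : ℝ) - phi * (W i 2 : ℝ)

noncomputable def eta (i : ℕ) : ℝ := -(wplus i * wminus i)


noncomputable def mu (i : ℕ) : ℕ := sInf {m : ℕ | 0 < m ∧ 2 * W i 1 < (Nat.fib (m + 2) : ℤ)}

noncomputable def Wstar (i n k : ℕ) : ℤ :=
  (-1) ^ k * ((Nat.fib (n - 1) : ℤ) * W i k - (Nat.fib n : ℤ) * W i (k - 1))


lemma phi_sq : phi ^ 2 = phi + 1 := by
  unfold phi
  have h : Real.sqrt 5 ^ 2 = 5 := Real.sq_sqrt (by norm_num)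
  nlinarith

lemma sqrt5_eq : Real.sqrt 5 = 2 * phi - 1 := by unfold phi; ring

lemma phi_gt : 1.618 < phi := by
  have h : (2.236 : ℝ) < Real.sqrt 5 := Real.lt_sqrt_of_sq_lt (by norm_num)
  unfold phi; linarith

lemma phi_lt : phi < 1.6181 := by
  have h : Real.sqrt 5 < 2.2362 := by
    rw [Real.sqrt_lt' (by norm_num)]; norm_num
  unfold phi; linarith

lemma phi_pos : 0 < phi := by linarith [phi_gt]

lemma phi_inv : phi⁻¹ = phi - 1 := by
  have := phi_pos
  field_simp
  linarith [phi_sq]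

lemma W_rec (i k : ℕ) : W i (k + 2) = W i (k + 1) + W i k := by
  cases k with
  | zero => simp [W]
  | succ k => simp [W]

lemma wplus_eq (i : ℕ) : wplus i = W i 1 + (phi - 1) * W i 0 := by
  have h := W_rec i 0
  have h2 : (W i 2 : ℝ) = W i 1 + W i 0 := by exact_mod_cast h
  unfold wplus
  rw [h2, phi_inv]
  linear_combination (W i 1 : ℝ) * phi_sq

lemma wminus_eq (i : ℕ) : wminus i = W i 1 - phi * W i 0 := by
  have h := W_rec i 0
  have h2 : (W i 2 : ℝ) = W i 1 + W i 0 := by exact_mod_cast h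
  unfold wminus
  rw [h2]
  linear_combination (W i 1 : ℝ) * phi_sq

lemma W_binet (i k : ℕ) :
    Real.sqrt 5 * W i k = wplus i * phi ^ k + -wminus i * (1 - phi) ^ k := by
  induction k using Nat.twoStepInduction with
  | zero => rw [sqrt5_eq, wplus_eq, wminus_eq]; ring
  | one =>
    rw [sqrt5_eq, wplus_eq, wminus_eq]; ring
  | more k h1 h2 =>
    rw [W_rec]
    push_cast
    rw [mul_add, h1, h2, pow_add phi k 2, pow_add (1 - phi) k 2,
      show (1 - phi) ^ 2 = 2 - phi by linarith [phi_sq], phi_sq]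
    ring

lemma fib_binet (k : ℕ) :
    Real.sqrt 5 * (Nat.fib k : ℝ) = phi ^ k - (1 - phi) ^ k := by
  induction k using Nat.twoStepInduction with
  | zero => simp
  | one => rw [sqrt5_eq]; simp; ring
  | more k h1 h2 =>
    rw [Nat.fib_add_two]
    push_cast
    rw [mul_add, h1, h2, pow_add phi k 2, pow_add (1 - phi) k 2,
      show (1 - phi) ^ 2 = 2 - phi by linarith [phi_sq], phi_sq]
    ring

lemma W0_eq (i : ℕ) : W i 0 = ⌊phi * i⌋ := by
  have h : phi ^ 2 * (⌊phi * i⌋ : ℝ) = phi * (⌊phi * i⌋ : ℝ) + (⌊phi * i⌋ : ℤ) := by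
    rw [phi_sq]; ring
  simp only [W]
  rw [h, Int.floor_add_intCast]; ring

lemma irr (i : ℕ) (hi : 0 < i) : ((⌊phi * i⌋ : ℤ) : ℝ) ≠ phi * i := by
  have h1 : Irrational phi := Real.goldenRatio_irrational
  have h2 : Irrational (phi * i) := by
    apply h1.mul_natCast; omega
  intro h
  exact (h2.ne_int _) h.symm

lemma W1_eq (i : ℕ) (hi : 0 < i) : W i 1 = W i 0 + i - 1 := by
  rw [W0_eq]
  have h1 := lt_of_le_of_ne (Int.floor_le (phi * i)) (irr i hi)
  have h2 := Int.lt_floor_add_one (phi * i)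
  simp only [W]
  rw [Int.floor_eq_iff]
  push_cast
  have := phi_sq
  have := phi_gt
  have := phi_lt
  constructor <;> nlinarith

lemma W0_lb (i : ℕ) (hi : 0 < i) : (1 : ℝ) ≤ W i 0 := by
  rw [W0_eq]
  have : (1 : ℤ) ≤ ⌊phi * i⌋ := by
    rw [Int.le_floor]
    have : (1 : ℝ) ≤ i := by exact_mod_cast hi
    have := phi_gt
    push_cast; nlinarith
  exact_mod_cast this

lemma W0_ub (i : ℕ) : (W i 0 : ℝ) ≤ phi * i := by
  rw [W0_eq]; exact Int.floor_le _

lemma W1_real (i : ℕ) (hi : 0 < i) : (W i 1 : ℝ) = W i 0 + i - 1 := by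
  rw [W1_eq i hi]; push_cast; ring

lemma x_bounds (i : ℕ) (hi : 0 < i) : 2 - phi ≤ -wminus i ∧ -wminus i ≤ 1 := by
  rw [wminus_eq, W1_real i hi]
  have h1 := W0_ub i
  have h2 : phi * i < W i 0 + 1 := by rw [W0_eq]; exact Int.lt_floor_add_one _
  have := phi_sq
  have := phi_gt
  have := phi_lt
  constructor <;> nlinarith

lemma wplus_lb (i : ℕ) (hi : 0 < i) : phi ≤ wplus i ∧ (i : ℝ) ≤ wplus i := by
  rw [wplus_eq, W1_real i hi]
  have h1 := W0_lb i hi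
  have : (1 : ℝ) ≤ i := by exact_mod_cast hi
  have := phi_gt
  constructor <;> nlinarith

lemma wplus_ub (i : ℕ) (hi : 0 < i) : wplus i ≤ 5 * i := by
  rw [wplus_eq, W1_real i hi]
  have h1 := W0_ub i
  have h0 := W0_lb i hi
  have : (1 : ℝ) ≤ i := by exact_mod_cast hi
  have := phi_gt
  have := phi_lt
  nlinarith

lemma eta_lb (i : ℕ) (hi : 0 < i) : 3 / 5 ≤ eta i ∧ (i : ℝ) / 3 ≤ eta i := by
  obtain ⟨a, b⟩ := x_bounds i hi
  obtain ⟨c, d⟩ := wplus_lb i hi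
  have he : eta i = wplus i * -wminus i := by unfold eta; ring
  rw [he]
  have : (1 : ℝ) ≤ i := by exact_mod_cast hi
  have := phi_gt
  have := phi_lt
  have := phi_sq
  constructor
  · have : phi * (2 - phi) ≤ wplus i * -wminus i := by
      apply mul_le_mul c a <;> linarith
    nlinarith
  · have : (i : ℝ) * (2 - phi) ≤ wplus i * -wminus i := by
      apply mul_le_mul d a <;> linarith
    nlinarith

lemma mu_spec (i : ℕ) : 0 < mu i ∧ 2 * W i 1 < (Nat.fib (mu i + 2) : ℤ) := by
  have hne : {m : ℕ | 0 < m ∧ 2 * W i 1 < (Nat.fib (m + 2) : ℤ)}.Nonempty := by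
    refine ⟨(2 * W i 1).toNat + 5, by omega, ?_⟩
    have := Nat.le_fib_self (n := (2 * W i 1).toNat + 5 + 2) (by omega)
    omega
  exact Nat.sInf_mem hne

lemma pow_eq (k : ℕ) : phi ^ (-(k : ℝ)) = (phi ^ k)⁻¹ := by
  rw [Real.rpow_neg phi_pos.le, Real.rpow_natCast]

lemma psi_pow (k : ℕ) : (1 - phi) ^ k = (-1) ^ k * (phi ^ k)⁻¹ := by
  rw [← inv_pow, phi_inv, ← mul_pow]; ring_nf

/-- the argument is at most one half in the second part -/
lemma theta_half (i : ℕ) (hi : 0 < i) (N : ℕ) (hN : mu i + 1 ≤ N) :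
    wplus i * (phi ^ N)⁻¹ ≤ 1 / 2 := by
  obtain ⟨h0, h1⟩ := mu_spec i
  have h2 : 2 * W i 1 + 1 ≤ (Nat.fib (N + 1) : ℤ) := by
    have : Nat.fib (mu i + 2) ≤ Nat.fib (N + 1) := Nat.fib_mono (by omega)
    omega
  have h3 : 2 * (W i 1 : ℝ) + 1 ≤ (Nat.fib (N + 1) : ℝ) := by exact_mod_cast h2
  have h4 := fib_binet (N + 1)
  have h5 := W_binet i 1
  have h6 : Real.sqrt 5 * (2 * (W i 1 : ℝ) + 1) ≤ Real.sqrt 5 * (Nat.fib (N + 1) : ℝ) :=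
    mul_le_mul_of_nonneg_left h3 (Real.sqrt_nonneg 5)
  obtain ⟨a, b⟩ := x_bounds i hi
  have g1 := phi_gt
  have g2 := phi_lt
  have h7 : |(1 - phi) ^ (N + 1)| ≤ 1 := by
    rw [abs_pow]
    apply pow_le_one₀ (abs_nonneg _)
    rw [abs_le]; constructor <;> linarith
  have h8 := (abs_le.mp h7).1
  have hs := sqrt5_eq
  have hp : 0 < phi ^ N := pow_pos phi_pos N
  rw [← div_eq_mul_inv, div_le_iff₀ hp]
  simp only [pow_one] at h5
  rw [pow_succ phi] at h4
  have : wplus i * phi ≤ 1 / 2 * phi ^ N * phi := by nlinarith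
  exact le_of_mul_le_mul_right this phi_pos

lemma Wstar_binet (i N : ℕ) :
    Real.sqrt 5 * (Wstar i (N + 1) 1 : ℝ) =
      -wminus i * phi ^ N + wplus i * (1 - phi) ^ N := by
  have h1 := fib_binet N
  have h2 := fib_binet (N + 1)
  unfold Wstar
  simp only [Nat.add_sub_cancel, pow_one, Nat.sub_self]
  push_cast
  rw [wplus_eq, wminus_eq]
  rw [pow_succ, pow_succ] at h2
  linear_combination (W i 0 : ℝ) * h2 - (W i 1 : ℝ) * h1

lemma sinc_lb (θ : ℝ) (h0 : 0 < θ) (h1 : θ ≤ 5 / 8) :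
    (1 / 3) * (π * θ) ≤ Real.sin (π * θ) := by
  have hp := Real.pi_gt_three
  have hp2 := Real.pi_lt_d2
  by_cases h : θ ≤ 1 / 2
  · have := Real.mul_le_sin (x := π * θ) (by positivity) (by nlinarith)
    have e : 2 / π * (π * θ) = 2 * θ := by field_simp
    rw [e] at this
    nlinarith
  · push Not at h
    have := Real.mul_le_sin (x := π * (1 - θ)) (mul_nonneg (by linarith) (by linarith))
      (by nlinarith)
    have e : 2 / π * (π * (1 - θ)) = 2 * (1 - θ) := by field_simp
    rw [e, show π * (1 - θ) = π - π * θ by ring, Real.sin_pi_sub] at this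
    nlinarith

lemma sinc_lb2 (y : ℝ) (h0 : 0 < y) (h1 : 0 ≤ Real.sin y) :
    y * (1 - y) ≤ Real.sin y := by
  by_cases h : y ≤ 1
  · have := Real.sin_gt_sub_cube h0
    nlinarith [sq_nonneg y, mul_pos h0 h0, mul_nonneg (sq_nonneg y) (sub_nonneg.2 h)]
  · nlinarith

lemma rpow_lip (σ : ℝ) (hσ : 1 < σ) (r : ℝ) (hr : 1 / 9 ≤ r) :
    |r ^ (-σ) - 1| ≤ σ * 9 ^ (σ + 1) * |r - 1| := by
  have := Convex.norm_image_sub_le_of_norm_hasDerivWithin_le (𝕜 := ℝ)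
    (f := fun x : ℝ => x ^ (-σ)) (f' := fun x => -σ * x ^ (-σ - 1)) (s := Set.Ici (1 / 9 : ℝ))
    (C := σ * 9 ^ (σ + 1)) (x := 1) (y := r) ?_ ?_ (convex_Ici _) ?_ hr
  · simpa using this
  · intro x hx
    have hx' : (1 / 9 : ℝ) ≤ x := hx
    exact (Real.hasDerivAt_rpow_const (Or.inl (by linarith))).hasDerivWithinAt
  · intro x hx
    have hx' : (1 / 9 : ℝ) ≤ x := hx
    have hx0 : 0 < x := by linarith
    rw [norm_mul, Real.norm_eq_abs, Real.norm_eq_abs, abs_neg, abs_of_pos (by linarith : 0 < σ),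
      abs_of_pos (Real.rpow_pos_of_pos hx0 _)]
    apply mul_le_mul_of_nonneg_left _ (by linarith)
    calc x ^ (-σ - 1) ≤ (1 / 9 : ℝ) ^ (-σ - 1) :=
          Real.rpow_le_rpow_of_nonpos (by norm_num) hx' (by linarith)
      _ = 9 ^ (σ + 1) := by
          rw [one_div, Real.inv_rpow (by norm_num), ← Real.rpow_neg (by norm_num)]; ring_nf
  · norm_num

set_option maxHeartbeats 1000000 in
lemma main_est (σ : ℝ) (hσ : 1 < σ) (f : ℝ → ℝ)
    (α : ℝ) (hα0 : 0 < α) (hα1 : α ≤ 1)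
    (hHolder : ∃ L : ℝ, 0 ≤ L ∧ ∀ x ∈ Set.Ico (0 : ℝ) 1, ∀ y ∈ Set.Ico (0 : ℝ) 1,
      |f x - f y| ≤ L * |x - y| ^ α) :
    ∃ C : ℝ, 0 < C ∧ ∀ η θ V e : ℝ, 3 / 5 ≤ η → 0 < θ → θ ≤ 5 / 8 → |e| ≤ θ ^ 2 →
      Real.sqrt 5 * (V * θ) = η + e →
      |f 0 / (π ^ σ * V ^ σ) * (f θ / Real.sin (π * θ) ^ σ)
        - f 0 ^ 2 * (5 : ℝ) ^ (σ / 2) / (π ^ (2 * σ) * η ^ σ)| ≤ C * θ ^ α * η ^ (-σ) := by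
  obtain ⟨L, hL0, hL⟩ := hHolder
  set K : ℝ := σ * 9 ^ (σ + 1) with hK
  have hKpos : 0 < K := by positivity
  refine ⟨|f 0| * (L * 9 ^ σ + |f 0| * (K * 6)) + 1, by positivity, ?_⟩
  intro η θ V e hη hθ0 hθ1 he hV
  have hp := Real.pi_gt_three
  have hp2 := Real.pi_lt_d2
  have hη0 : 0 < η := by linarith
  have hs1 := sinc_lb θ hθ0 hθ1
  have hπθ : 0 < π * θ := by positivity
  have hsin0 : 0 < Real.sin (π * θ) := by nlinarith
  have hs2 := sinc_lb2 (π * θ) hπθ hsin0.le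
  have hs3 := Real.sin_lt hπθ
  set S := Real.sin (π * θ) with hS
  have h5 : 0 < Real.sqrt 5 := by positivity
  have h5' : Real.sqrt 5 ^ 2 = 5 := Real.sq_sqrt (by norm_num)
  obtain ⟨he1, he2⟩ := abs_le.mp he
  have hθsq : θ ^ 2 ≤ 5 / 8 * θ := by nlinarith
  have hηe : η / 3 ≤ η + e := by nlinarith
  have hV0 : 0 < V := by
    have : 0 < Real.sqrt 5 * (V * θ) := by rw [hV]; linarith
    exact pos_of_mul_pos_left (pos_of_mul_pos_right this h5.le) hθ0.le
  set s := S / (π * θ) with hs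
  have hsl : 1 / 3 ≤ s := by rw [hs, le_div_iff₀ hπθ]; exact hs1
  have hsu : s ≤ 1 := by rw [hs, div_le_one hπθ]; exact hs3.le
  have hsl2 : 1 - π * θ ≤ s := by rw [hs, le_div_iff₀ hπθ]; linarith
  set t := (η + e) / η with ht
  have htl : 1 / 3 ≤ t := by rw [ht, le_div_iff₀ hη0]; linarith
  have ht1 : |t - 1| ≤ 2 * θ := by
    have : t - 1 = e / η := by rw [ht]; field_simp; ring
    rw [this, abs_div, abs_of_pos hη0, div_le_iff₀ hη0]
    nlinarith
  set r := t * s with hr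
  have hr9 : 1 / 9 ≤ r := by nlinarith
  have hr0 : 0 < r := by linarith
  have hr1 : |r - 1| ≤ 6 * θ := by
    have e1 : r - 1 = (t - 1) * s + (s - 1) := by rw [hr]; ring
    have e2 : |s - 1| ≤ π * θ := by rw [abs_le]; constructor <;> linarith
    have e3 : |(t - 1) * s| ≤ 2 * θ := by
      rw [abs_mul, abs_of_pos (by linarith : 0 < s)]
      nlinarith [abs_nonneg (t - 1)]
    rw [e1]
    have := abs_add_le ((t - 1) * s) (s - 1)
    nlinarith
  set Q := π ^ 2 * η / Real.sqrt 5 with hQ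
  have hQ0 : 0 < Q := by positivity
  have hP : π * V * S = Q * r := by
    have hVe : V = (η + e) / (Real.sqrt 5 * θ) := by
      rw [← hV]; field_simp
    rw [hVe, hQ, hr, ht, hs]
    field_simp
  have T1 : f 0 / (π ^ σ * V ^ σ) * (f θ / S ^ σ) = f 0 * f θ * (Q ^ (-σ) * r ^ (-σ)) := by
    rw [← Real.mul_rpow hQ0.le hr0.le, ← hP, Real.rpow_neg (by positivity),
      Real.mul_rpow (by positivity) hsin0.le, Real.mul_rpow (by positivity) hV0.le]
    field_simp
  have T2 : f 0 ^ 2 * (5 : ℝ) ^ (σ / 2) / (π ^ (2 * σ) * η ^ σ) = f 0 * f 0 * Q ^ (-σ) := by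
    rw [hQ, Real.rpow_neg (by positivity), Real.div_rpow (by positivity) h5.le,
      Real.mul_rpow (by positivity) hη0.le, Real.rpow_mul (by positivity), Real.rpow_two,
      Real.sqrt_eq_rpow, ← Real.rpow_mul (by norm_num), show (1 / 2 * σ) = σ / 2 by ring]
    field_simp
  have hQη : Q ^ (-σ) ≤ η ^ (-σ) := by
    apply Real.rpow_le_rpow_of_nonpos hη0 _ (by linarith)
    rw [hQ, le_div_iff₀ h5]
    have a1 : Real.sqrt 5 ≤ 3 := Real.sqrt_le_iff.2 (by norm_num)
    have a2 : (3 : ℝ) ^ 2 ≤ π ^ 2 := pow_le_pow_left₀ (by norm_num) hp.le 2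
    rw [mul_comm]
    exact mul_le_mul_of_nonneg_right (by linarith) hη0.le
  have hQσ : 0 < Q ^ (-σ) := Real.rpow_pos_of_pos hQ0 _
  have hησ : 0 < η ^ (-σ) := Real.rpow_pos_of_pos hη0 _
  have hθα : θ ≤ θ ^ α := by
    have := Real.rpow_le_rpow_of_exponent_ge hθ0 (by linarith) hα1
    simpa using this
  have hθα0 : 0 < θ ^ α := Real.rpow_pos_of_pos hθ0 _
  have hf : |f θ - f 0| ≤ L * θ ^ α := by
    have := hL θ ⟨hθ0.le, by linarith⟩ 0 ⟨le_rfl, by norm_num⟩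
    simpa [abs_of_pos hθ0] using this
  have hrσ : r ^ (-σ) ≤ 9 ^ σ := by
    calc r ^ (-σ) ≤ (1 / 9 : ℝ) ^ (-σ) :=
          Real.rpow_le_rpow_of_nonpos (by norm_num) hr9 (by linarith)
      _ = 9 ^ σ := by
          rw [one_div, Real.inv_rpow (by norm_num), ← Real.rpow_neg (by norm_num), neg_neg]
  have hrσ0 : 0 < r ^ (-σ) := Real.rpow_pos_of_pos hr0 _
  have hlip : |r ^ (-σ) - 1| ≤ K * 6 * θ ^ α := by
    refine (rpow_lip σ hσ r hr9).trans ?_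
    rw [← hK]
    calc K * |r - 1| ≤ K * (6 * θ ^ α) := by gcongr; linarith
      _ = _ := by ring
  rw [T1, T2]
  have e1 : f 0 * f θ * (Q ^ (-σ) * r ^ (-σ)) - f 0 * f 0 * Q ^ (-σ) =
      f 0 * ((f θ - f 0) * r ^ (-σ) + f 0 * (r ^ (-σ) - 1)) * Q ^ (-σ) := by ring
  rw [e1, abs_mul, abs_mul, abs_of_pos hQσ]
  have e2 : |(f θ - f 0) * r ^ (-σ) + f 0 * (r ^ (-σ) - 1)| ≤
      L * θ ^ α * 9 ^ σ + |f 0| * (K * 6 * θ ^ α) := by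
    refine (abs_add_le _ _).trans ?_
    rw [abs_mul, abs_mul, abs_of_pos hrσ0]
    gcongr
  calc |f 0| * |(f θ - f 0) * r ^ (-σ) + f 0 * (r ^ (-σ) - 1)| * Q ^ (-σ)
      ≤ |f 0| * (L * θ ^ α * 9 ^ σ + |f 0| * (K * 6 * θ ^ α)) * η ^ (-σ) := by gcongr
    _ ≤ (|f 0| * (L * 9 ^ σ + |f 0| * (K * 6)) + 1) * θ ^ α * η ^ (-σ) := by
        have : 0 < θ ^ α * η ^ (-σ) := by positivity
        nlinarith

/-- Exponential decay of the approximation of the limit expressions by the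
constant `f(0)² 5^{σ/2} / (π^{2σ} η_i^σ)`. -/
theorem exponential_decay
    (σ : ℝ) (hσ : 1 < σ) (f : ℝ → ℝ)
    (hper : ∀ t : ℝ, f (t + 1) = f t)
    (α : ℝ) (hα0 : 0 < α) (hα1 : α ≤ 1)
    (hHolder : ∃ L : ℝ, 0 ≤ L ∧ ∀ x ∈ Set.Ico (0 : ℝ) 1, ∀ y ∈ Set.Ico (0 : ℝ) 1,
      |f x - f y| ≤ L * |x - y| ^ α) :
    ∃ B Bstar : ℝ, 0 < B ∧ 0 < Bstar ∧
      ∀ i : ℕ, 0 < i →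
        (∀ k : ℕ, 0 < k →
          |f 0 / (π ^ σ * (W i k : ℝ) ^ σ) *
              (f (-wminus i * phi ^ (-(k : ℝ))) /
                Real.sin (π * -wminus i * phi ^ (-(k : ℝ))) ^ σ)
            - f 0 ^ 2 * (5 : ℝ) ^ (σ / 2) / (π ^ (2 * σ) * eta i ^ σ)|
            ≤ B / (phi ^ (α * (k : ℝ)) * (i : ℝ) ^ σ)) ∧
        (∀ j : ℕ, 0 < j →
          |f (wplus i * phi ^ (-((mu i + j : ℕ) : ℝ))) /
                Real.sin (π * wplus i * phi ^ (-((mu i + j : ℕ) : ℝ))) ^ σ *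
              (f 0 / (π ^ σ * (Wstar i (mu i + j + 1) 1 : ℝ) ^ σ))
            - f 0 ^ 2 * (5 : ℝ) ^ (σ / 2) / (π ^ (2 * σ) * eta i ^ σ)|
            ≤ Bstar / (phi ^ (α * ((mu i + j : ℕ) : ℝ)) * (i : ℝ) ^ (σ - α))) := by
  obtain ⟨C, hC, H⟩ := main_est σ hσ f α hα0 hα1 hHolder
  refine ⟨C * 3 ^ σ, 5 * C * 3 ^ σ, by positivity, by positivity, ?_⟩
  intro i hi
  have hi1 : (1 : ℝ) ≤ i := by exact_mod_cast hi
  have hi0 : (0 : ℝ) < i := by linarith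
  obtain ⟨hx1, hx2⟩ := x_bounds i hi
  obtain ⟨hw1, hw2⟩ := wplus_lb i hi
  obtain ⟨hη1, hη2⟩ := eta_lb i hi
  have hwu := wplus_ub i hi
  have g1 := phi_gt
  have g2 := phi_lt
  have hpp := phi_pos
  have he : eta i = wplus i * -wminus i := by unfold eta; ring
  have hησ : eta i ^ (-σ) ≤ 3 ^ σ * (i : ℝ) ^ (-σ) := by
    calc eta i ^ (-σ) ≤ ((i : ℝ) / 3) ^ (-σ) :=
          Real.rpow_le_rpow_of_nonpos (by positivity) hη2 (by linarith)
      _ = 3 ^ σ * (i : ℝ) ^ (-σ) := by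
          rw [Real.div_rpow hi0.le (by norm_num), Real.rpow_neg (by norm_num : (0:ℝ) ≤ 3),
            div_inv_eq_mul, mul_comm]
  have hησ0 : 0 < eta i ^ (-σ) := Real.rpow_pos_of_pos (by linarith) _
  have hx0 : 0 < -wminus i := by linarith
  have hw0 : 0 < wplus i := by linarith
  have hpk : ∀ k : ℕ, (phi ^ (-(k : ℝ))) ^ α = (phi ^ (α * (k : ℝ)))⁻¹ := by
    intro k
    rw [← Real.rpow_mul hpp.le, ← Real.rpow_neg hpp.le]; ring_nf
  constructor
  · intro k hk
    have hpk0 : 0 < phi ^ k := pow_pos hpp k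
    have hq0 : 0 < phi ^ (-(k : ℝ)) := Real.rpow_pos_of_pos hpp _
    have hq : phi ^ (-(k : ℝ)) ≤ 5 / 8 := by
      rw [pow_eq]
      have : phi ^ 1 ≤ phi ^ k := pow_le_pow_right₀ (by linarith) hk
      rw [inv_le_comm₀ hpk0 (by norm_num)]
      norm_num at this ⊢
      linarith
    have hθ : -wminus i * phi ^ (-(k : ℝ)) ≤ phi ^ (-(k : ℝ)) := by nlinarith
    have key := H (eta i) (-wminus i * phi ^ (-(k : ℝ))) (W i k)
      ((-1) ^ k * (-wminus i * phi ^ (-(k : ℝ))) ^ 2) hη1 (by positivity) (hθ.trans hq)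
      (by rw [abs_mul, abs_pow, abs_neg, abs_one, one_pow, one_mul, abs_of_nonneg (sq_nonneg _)]) (by
        rw [← mul_assoc, W_binet, psi_pow, he, pow_eq]
        field_simp
        try ring)
    rw [← mul_assoc] at key
    refine key.trans ?_
    calc C * (-wminus i * phi ^ (-(k : ℝ))) ^ α * eta i ^ (-σ)
        ≤ C * (phi ^ (-(k : ℝ))) ^ α * (3 ^ σ * (i : ℝ) ^ (-σ)) := by gcongr
      _ = _ := by rw [hpk, Real.rpow_neg hi0.le]; field_simp
  · intro j hj
    have hN : mu i + 1 ≤ mu i + j := by omega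
    generalize mu i + j = N at hN
    have hpk0 : 0 < phi ^ N := pow_pos hpp N
    have hq0 : 0 < phi ^ (-(N : ℝ)) := Real.rpow_pos_of_pos hpp _
    have hθ := theta_half i hi N hN
    rw [← pow_eq] at hθ
    have key := H (eta i) (wplus i * phi ^ (-(N : ℝ))) (Wstar i (N + 1) 1)
      ((-1) ^ N * (wplus i * phi ^ (-(N : ℝ))) ^ 2) hη1 (by positivity) (by linarith)
      (by rw [abs_mul, abs_pow, abs_neg, abs_one, one_pow, one_mul, abs_of_nonneg (sq_nonneg _)]) (by
        rw [← mul_assoc, Wstar_binet, psi_pow, he, pow_eq]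
        field_simp
        try ring)
    rw [← mul_assoc, mul_comm (f 0 / _)] at key
    refine key.trans ?_
    have h5 : (5 : ℝ) ^ α ≤ 5 := by
      have := Real.rpow_le_rpow_of_exponent_le (x := (5 : ℝ)) (by norm_num) hα1
      simpa using this
    calc C * (wplus i * phi ^ (-(N : ℝ))) ^ α * eta i ^ (-σ)
        ≤ C * ((5 * i) * phi ^ (-(N : ℝ))) ^ α * (3 ^ σ * (i : ℝ) ^ (-σ)) := by gcongr
      _ = C * (5 ^ α * (i : ℝ) ^ α * (phi ^ (α * (N : ℝ)))⁻¹) * (3 ^ σ * (i : ℝ) ^ (-σ)) := by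
          rw [Real.mul_rpow (by positivity) hq0.le, Real.mul_rpow (by norm_num) hi0.le, hpk]
      _ ≤ C * (5 * (i : ℝ) ^ α * (phi ^ (α * (N : ℝ)))⁻¹) * (3 ^ σ * (i : ℝ) ^ (-σ)) := by
          gcongr
      _ = _ := by
          rw [Real.rpow_neg hi0.le, Real.rpow_sub hi0]; field_simp
end

section
/- For every real σ > 1, the sum over all nonzero ideals I of the ring of integers of ℚ(√5) of 1/(card(O_{ℚ(√5)}/I))^σ equals Σ_{i=1}^∞ 1/η_i^σ. Equivalently, the Dedekind zeta function of ℚ(√5) at σ satisfies ζ_{ℚ(√5)}(σ) = Σ_{i=1}^∞ η_i^{−σ}. -/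
open Real

lemma key_phi : phi ^ 2 = phi + 1 ∧ 1.6 < phi ∧ phi < 1.7 := by
  have h : Real.sqrt 5 ^ 2 = 5 := Real.sq_sqrt (by norm_num)
  have h0 := Real.sqrt_nonneg 5
  unfold phi
  refine ⟨by nlinarith, ?_, ?_⟩ <;> nlinarith

abbrev QQ := QuadraticAlgebra ℤ 1 1

noncomputable def homR (t : ℝ) (ht : t * t = t + 1) : QQ →ₐ[ℤ] ℝ :=
  QuadraticAlgebra.lift ⟨t, by simp [ht, add_comm]⟩

lemma homR_apply (t : ℝ) (ht : t * t = t + 1) (z : QQ) : homR t ht z = z.re + z.im * t := by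
  simp [homR, QuadraticAlgebra.lift]

noncomputable def ff : QQ →ₐ[ℤ] ℝ := homR phi (by nlinarith [key_phi.1])
noncomputable def gg : QQ →ₐ[ℤ] ℝ := homR (1 - phi) (by nlinarith [key_phi.1])

lemma ff_apply (z : QQ) : ff z = z.re + z.im * phi := homR_apply _ _ _
lemma gg_apply (z : QQ) : gg z = z.re + z.im * (1 - phi) := homR_apply _ _ _

lemma norm_ff_gg (z : QQ) : ((z.norm : ℤ) : ℝ) = ff z * gg z := by
  rw [ff_apply, gg_apply, QuadraticAlgebra.norm_def]
  push_cast
  linear_combination (-(z.im : ℝ)^2) * (-1) * key_phi.1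

lemma phi_irr : Irrational phi := Real.goldenRatio_irrational

lemma ff_ne (z : QQ) (hz : z ≠ 0) : ff z ≠ 0 := by
  intro h
  rw [ff_apply] at h
  by_cases him : z.im = 0
  · apply hz
    simp [him] at h
    ext <;> simp [h, him]
  · have := (phi_irr.intCast_mul him).intCast_add z.re
    rw [h] at this
    exact this.ne_zero rfl

lemma norm_ne (z : QQ) (hz : z ≠ 0) : z.norm ≠ 0 := by
  intro h
  have h1 := norm_ff_gg z
  have h2 : ff (star z) = gg z := by
    rw [ff_apply, gg_apply]; simp; ring
  have h3 : star z ≠ 0 := by simpa using hz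
  rw [h, ← h2] at h1
  have := mul_ne_zero (ff_ne z hz) (ff_ne _ h3)
  simp at h1
  exact this (by simpa using h1)

lemma gg_ne (z : QQ) (hz : z ≠ 0) : gg z ≠ 0 := by
  intro h
  apply norm_ne z hz
  have h1 := norm_ff_gg z
  rw [h, mul_zero] at h1
  exact_mod_cast h1

lemma int_div (u n : ℤ) (hn : n ≠ 0) : ∃ q : ℤ, 2 * |u - q * n| ≤ |n| := by
  refine ⟨round ((u : ℚ) / n), ?_⟩
  have h := abs_sub_round ((u : ℚ) / n)
  have hn' : (n : ℚ) ≠ 0 := by exact_mod_cast hn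
  have h2 : ((u : ℚ) - round ((u : ℚ) / n) * n) = ((u : ℚ) / n - round ((u : ℚ) / n)) * n := by
    field_simp
  have h3 : (2 * |(u : ℚ) - round ((u : ℚ) / n) * n|) ≤ |(n : ℚ)| := by
    rw [h2, abs_mul]
    nlinarith [abs_nonneg (n : ℚ)]
  exact_mod_cast h3

lemma QQ_div (x y : QQ) (hy : y ≠ 0) : ∃ q : QQ, (x - q * y).norm.natAbs < y.norm.natAbs := by
  have hn := norm_ne y hy
  obtain ⟨q1, h1⟩ := int_div (x * star y).re y.norm hn
  obtain ⟨q2, h2⟩ := int_div (x * star y).im y.norm hn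
  refine ⟨⟨q1, q2⟩, ?_⟩
  set n := y.norm with hnn
  set A := (x * star y).re - q1 * n with hA
  set B := (x * star y).im - q2 * n with hB
  have e1 : (x - ⟨q1, q2⟩ * y) * star y = ⟨A, B⟩ := by
    have := QuadraticAlgebra.algebraMap_norm_eq_mul_star y
    rw [sub_mul, mul_assoc, ← this, ← hnn]
    ext <;> simp [hA, hB]
  have e2 : (x - ⟨q1, q2⟩ * y).norm * n = A ^ 2 + A * B - B ^ 2 := by
    have := congrArg QuadraticAlgebra.norm e1
    rw [map_mul, QuadraticAlgebra.norm_star, ← hnn] at this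
    rw [this, QuadraticAlgebra.norm_def]; ring
  zify
  have hn0 : 0 < |n| := abs_pos.mpr hn
  have e3 : |(x - ⟨q1, q2⟩ * y).norm| * |n| < |n| * |n| := by
    rw [← abs_mul, e2]
    have a1 := abs_le.mp (show |A| ≤ |A| from le_rfl)
    have a2 := abs_le.mp (show |B| ≤ |B| from le_rfl)
    have c1 : A ^ 2 = |A| ^ 2 := (sq_abs A).symm
    have c2 : B ^ 2 = |B| ^ 2 := (sq_abs B).symm
    have c3 : |A * B| = |A| * |B| := abs_mul A B
    have c4 := abs_le.mp c3.le
    rw [c1, c2, abs_lt]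
    have p1 : 4 * (|A| * |A|) ≤ |n| * |n| := by nlinarith [abs_nonneg A]
    have p2 : 4 * (|B| * |B|) ≤ |n| * |n| := by nlinarith [abs_nonneg B]
    have p3 : 4 * (|A| * |B|) ≤ |n| * |n| := by nlinarith [abs_nonneg A, abs_nonneg B]
    constructor <;> nlinarith [abs_nonneg A, abs_nonneg B]
  exact lt_of_mul_lt_mul_right e3 hn0.le

lemma QQ_pid : IsPrincipalIdealRing QQ := by
  refine ⟨fun I => ?_⟩
  by_cases hI : I = ⊥
  · subst hI; exact bot_isPrincipal
  obtain ⟨y0, hy0, hy0'⟩ := Submodule.exists_mem_ne_zero_of_ne_bot hI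
  obtain ⟨y, ⟨hy, hy'⟩, hmin⟩ := (measure (fun z : QQ => z.norm.natAbs)).wf.has_min
    {z : QQ | z ∈ I ∧ z ≠ 0} ⟨y0, hy0, hy0'⟩
  refine ⟨⟨y, le_antisymm (fun x hx => ?_) ?_⟩⟩
  · obtain ⟨q, hq⟩ := QQ_div x y hy'
    have : x - q * y = 0 := by
      by_contra hne
      exact hmin (x - q * y) ⟨I.sub_mem hx (I.mul_mem_left q hy), hne⟩ hq
    rw [sub_eq_zero.mp this]
    exact Ideal.mul_mem_left _ q (Ideal.mem_span_singleton_self y)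
  · exact (Ideal.span_singleton_le_iff_mem I).mpr hy

/-- The reduced generators. -/
noncomputable def gam (i : ℕ) : QQ := ⟨(i : ℤ), ⌊phi * ((i : ℝ) + 1)⌋⟩

lemma gam_im_pos (i : ℕ) : 1 ≤ (gam i).im := by
  obtain ⟨h1, h2, h3⟩ := key_phi
  have hi : (0 : ℝ) ≤ i := Nat.cast_nonneg i
  have : (1 : ℤ) ≤ ⌊phi * ((i : ℝ) + 1)⌋ := by
    apply Int.le_floor.mpr
    push_cast
    nlinarith
  exact this

lemma gam_bounds (i : ℕ) : 0 < ff (gam i) ∧ -1 ≤ gg (gam i) ∧ gg (gam i) < phi - 2 := by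
  obtain ⟨h1, h2, h3⟩ := key_phi
  have hi : (0 : ℝ) ≤ i := Nat.cast_nonneg i
  have hm : (1 : ℝ) ≤ (gam i).im := by exact_mod_cast gam_im_pos i
  have f1 : ((gam i).im : ℝ) ≤ phi * ((i : ℝ) + 1) := Int.floor_le _
  have f2 : phi * ((i : ℝ) + 1) < ((gam i).im : ℝ) + 1 := Int.lt_floor_add_one _
  have hre : ((gam i).re : ℝ) = i := by simp [gam]
  rw [ff_apply, gg_apply, hre]
  refine ⟨by nlinarith, ?_, ?_⟩
  · have := mul_le_mul_of_nonneg_right f1 (show (0 : ℝ) ≤ phi - 1 by linarith)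
    nlinarith
  · have := mul_lt_mul_of_pos_right f2 (show (0 : ℝ) < phi - 1 by linarith)
    nlinarith

lemma gam_ne (i : ℕ) : gam i ≠ 0 := by
  intro h
  have := gam_im_pos i
  rw [h] at this
  simp at this

lemma gam_inj {i j : ℕ} (h : Associated (gam i) (gam j)) : i = j := by
  obtain ⟨u, hu⟩ := h
  obtain ⟨h1, h2, h3⟩ := key_phi
  obtain ⟨a1, a2, a3⟩ := gam_bounds i
  obtain ⟨b1, b2, b3⟩ := gam_bounds j
  have hf : ff (gam i) * ff u = ff (gam j) := by rw [← map_mul, hu]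
  have hg : gg (gam i) * gg u = gg (gam j) := by rw [← map_mul, hu]
  have fu : 0 < ff (u : QQ) := by
    by_contra hc
    nlinarith
  have gu : 0 < gg (u : QQ) := by
    by_contra hc
    nlinarith
  have hn : ff (u : QQ) * gg u = 1 := by
    have hun : IsUnit (QuadraticAlgebra.norm (u : QQ)) :=
      QuadraticAlgebra.isUnit_iff_norm_isUnit.mp u.isUnit
    have hnf := norm_ff_gg (u : QQ)
    rcases Int.isUnit_iff.mp hun with h | h
    · rw [h] at hnf; push_cast at hnf; exact hnf.symm
    · rw [h] at hnf; push_cast at hnf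
      nlinarith [mul_pos fu gu]
  have e : (phi - 2) * (phi + 1) = -1 := by nlinarith
  have g1 : gg (u : QQ) < phi + 1 := by
    by_contra hc
    nlinarith
  have g2 : 2 - phi < gg (u : QQ) := by
    by_contra hc
    nlinarith
  have htr : ff (u : QQ) + gg u = ((2 * (u : QQ).re + (u : QQ).im : ℤ) : ℝ) := by
    rw [ff_apply, gg_apply]; push_cast; ring
  have hlt : ff (u : QQ) + gg u < 3 := by
    have : (gg (u : QQ) - (phi + 1)) * (gg u - (2 - phi)) < 0 :=
      mul_neg_of_neg_of_pos (by linarith) (by linarith)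
    have h4 : gg (u : QQ) * (ff (u : QQ) + gg u) < gg (u : QQ) * 3 := by nlinarith
    exact lt_of_mul_lt_mul_left h4 gu.le
  have hge : 2 ≤ ff (u : QQ) + gg u := by
    by_contra hc
    nlinarith [sq_nonneg (ff (u : QQ) - gg u)]
  have ht : (2 * (u : QQ).re + (u : QQ).im : ℤ) = 2 := by
    rw [htr] at hlt hge
    have l1 : (2 * (u : QQ).re + (u : QQ).im : ℤ) < 3 := by exact_mod_cast hlt
    have l2 : 2 ≤ (2 * (u : QQ).re + (u : QQ).im : ℤ) := by exact_mod_cast hge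
    omega
  rw [ht] at htr
  push_cast at htr
  have hf1 : ff (u : QQ) = 1 := by
    have : (ff (u : QQ) - 1) ^ 2 = 0 := by nlinarith
    have := pow_eq_zero_iff (two_ne_zero) |>.mp this
    linarith
  have hu1 : (u : QQ) = 1 := by
    by_contra hne
    apply ff_ne ((u : QQ) - 1) (sub_ne_zero.mpr hne)
    rw [map_sub, hf1, map_one, sub_self]
  rw [hu1, mul_one] at hu
  have := congrArg QuadraticAlgebra.re hu
  simpa [gam] using this

/-- The fundamental unit. -/
def uu : QQˣ := ⟨⟨0, 1⟩, ⟨-1, 1⟩, by ext <;> rfl, by ext <;> rfl⟩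

lemma ff_uu : ff (uu : QQ) = phi := by rw [ff_apply]; simp [uu]
lemma gg_uu : gg (uu : QQ) = 1 - phi := by rw [gg_apply]; simp [uu]

lemma hom_zpow (h : QQ →ₐ[ℤ] ℝ) (v : QQˣ) (n : ℤ) : h ((v ^ n : QQˣ) : QQ) = h v ^ n := by
  have h1 := map_zpow (Units.map (h : QQ →* ℝ)) v n
  have h2 := congrArg Units.val h1
  rw [Units.val_zpow_eq_zpow_val] at h2
  exact h2

lemma gam_of_bounds (z : QQ) (hf : 0 < ff z) (hg1 : -1 ≤ gg z) (hg2 : gg z < phi - 2) :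
    ∃ i, gam i = z := by
  obtain ⟨h1, h2, h3⟩ := key_phi
  rw [ff_apply] at hf
  rw [gg_apply] at hg1 hg2
  have him : 0 < z.im := by
    have : (0 : ℝ) < z.im := by nlinarith
    exact_mod_cast this
  have himr : (1 : ℝ) ≤ z.im := by exact_mod_cast him
  have hre : 0 ≤ z.re := by
    have : (-1 : ℝ) < z.re := by nlinarith
    have : (-1 : ℤ) < z.re := by exact_mod_cast this
    omega
  obtain ⟨j, hj⟩ := Int.eq_ofNat_of_zero_le hre
  refine ⟨j, ?_⟩
  have hj' : (z.re : ℝ) = j := by rw [hj]; simp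
  rw [hj'] at hg1 hg2
  have : ⌊phi * ((j : ℝ) + 1)⌋ = z.im := by
    rw [Int.floor_eq_iff]
    constructor
    · nlinarith
    · nlinarith
  ext
  · simp [gam, hj]
  · simp [gam, this]

lemma gam_surj (z : QQ) (hz : z ≠ 0) : ∃ i, Associated (gam i) z := by
  obtain ⟨h1, h2, h3⟩ := key_phi
  -- normalise signs
  obtain ⟨z1, hz1, hz1f⟩ : ∃ z1, Associated z1 z ∧ 0 < ff z1 := by
    rcases lt_or_gt_of_ne (ff_ne z hz) with h | h
    · exact ⟨-z, (Associated.refl z).neg_left, by rw [map_neg]; linarith⟩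
    · exact ⟨z, Associated.refl z, h⟩
  have hz1n : z1 ≠ 0 := by
    rintro rfl
    simp at hz1f
  obtain ⟨z2, hz2, hz2f, hz2g⟩ : ∃ z2, Associated z2 z ∧ 0 < ff z2 ∧ gg z2 < 0 := by
    rcases lt_or_gt_of_ne (gg_ne z1 hz1n) with h | h
    · exact ⟨z1, hz1, hz1f, h⟩
    · refine ⟨z1 * uu, (associated_mul_unit_left z1 _ uu.isUnit).trans hz1, ?_, ?_⟩
      · rw [map_mul, ff_uu]; nlinarith
      · rw [map_mul, gg_uu]; nlinarith
  obtain ⟨n, hn1, hn2⟩ := exists_mem_Ioc_zpow (x := -gg z2) (y := phi + 1) (by linarith) (by linarith)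
  set v : QQˣ := uu ^ (2 : ℤ) with hv
  have hvf : ff (v : QQ) = phi + 1 := by
    rw [hv, hom_zpow, ff_uu]; exact_mod_cast h1
  have hvg : gg (v : QQ) = (phi + 1)⁻¹ := by
    rw [hv, hom_zpow, gg_uu]
    apply eq_inv_of_mul_eq_one_left
    have : (1 - phi) ^ (2 : ℤ) = (1 - phi) ^ 2 := by norm_cast
    rw [this]; nlinarith
  have hp : (0 : ℝ) < phi + 1 := by linarith
  refine (gam_of_bounds (z2 * (v ^ (n + 1) : QQˣ)) ?_ ?_ ?_).imp fun i hi => ?_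
  · rw [map_mul, hom_zpow, hvf]; positivity
  · rw [map_mul, hom_zpow, hvg, inv_zpow]
    have hq : 0 < (phi + 1) ^ (n + 1) := by positivity
    have : -gg z2 * ((phi + 1) ^ (n + 1))⁻¹ ≤ 1 := by
      rw [← div_eq_mul_inv, div_le_one hq]; exact hn2
    linarith
  · rw [map_mul, hom_zpow, hvg, inv_zpow]
    have hq : 0 < (phi + 1) ^ (n + 1) := by positivity
    have e : (2 - phi) * (phi + 1) = 1 := by nlinarith
    have e2 : (2 - phi) * (phi + 1) ^ (n + 1) = (phi + 1) ^ n := by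
      rw [zpow_add_one₀ hp.ne']
      linear_combination (phi + 1) ^ n * e
    have : 2 - phi < -gg z2 * ((phi + 1) ^ (n + 1))⁻¹ := by
      rw [← div_eq_mul_inv, lt_div_iff₀ hq, e2]; exact hn1
    linarith
  · rw [hi]
    exact (associated_mul_unit_left z2 _ (Units.isUnit _)).trans hz2

lemma W_vals (i : ℕ) : W (i + 1) 1 = (gam i).im + i ∧ W (i + 1) 2 = 2 * (gam i).im + i := by
  obtain ⟨h1, h2, h3⟩ := key_phi
  obtain ⟨_, b1, b2⟩ := gam_bounds i
  have hre : ((gam i).re : ℝ) = i := by simp [gam]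
  replace b1 : -1 < gg (gam i) := by
    refine lt_of_le_of_ne b1 fun h => ?_
    refine gg_ne (gam i + 1) (fun h0 => ?_) (by rw [map_add, ← h, map_one]; ring)
    have h4 := congrArg QuadraticAlgebra.im h0
    have h5 := gam_im_pos i
    have h6 : (gam i).im + 0 = 0 := h4
    omega
  rw [gg_apply, hre] at b1 b2
  have hm : ⌊phi * ((i + 1 : ℕ) : ℝ)⌋ = (gam i).im := by push_cast; rfl
  have hW1 : W (i + 1) 1 = ⌊phi * ((gam i).im : ℝ)⌋ := by rw [W, hm]
  have hW2 : W (i + 1) 2 = ⌊phi ^ 2 * ((gam i).im : ℝ)⌋ := by rw [W, hm]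
  rw [hW1, hW2, Int.floor_eq_iff, Int.floor_eq_iff]
  push_cast
  have hne : (gam i).im * (1 - phi) + (i : ℝ) ≤ 0 := by linarith
  refine ⟨⟨by nlinarith, by nlinarith⟩, by nlinarith, by nlinarith⟩

lemma eta_eq (i : ℕ) : eta (i + 1) = (((gam i).norm.natAbs : ℕ) : ℝ) := by
  obtain ⟨h1, h2, h3⟩ := key_phi
  obtain ⟨b0, b1, b2⟩ := gam_bounds i
  have hn := norm_ff_gg (gam i)
  have hneg : (gam i).norm ≤ 0 := by
    have : ((gam i).norm : ℝ) ≤ 0 := by rw [hn]; nlinarith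
    exact_mod_cast this
  have : (((gam i).norm.natAbs : ℕ) : ℝ) = -((gam i).norm : ℝ) := by
    have h : (((gam i).norm.natAbs : ℕ) : ℤ) = -(gam i).norm := by omega
    rw [← Int.cast_natCast, h, Int.cast_neg]
  rw [this, eta, wplus, wminus, (W_vals i).1, (W_vals i).2, QuadraticAlgebra.norm_def]
  have hre : (gam i).re = i := by simp [gam]
  have hinv : phi⁻¹ = phi - 1 := by
    apply inv_eq_of_mul_eq_one_right; nlinarith
  have h3' : phi ^ 3 = 2 * phi + 1 := by rw [pow_succ, h1]; nlinarith
  have h4' : phi ^ 4 = 3 * phi + 2 := by rw [pow_succ, h3']; nlinarith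
  rw [hinv, hre]
  push_cast
  ring_nf
  rw [h3', h4', h1]
  ring

instance factQ : Fact (∀ r : ℚ, r ^ 2 ≠ 1 + 1 * r) := ⟨fun r h => by
  have h5 : (2 * r - 1) ^ 2 = 5 := by linear_combination 4 * h
  have hs : IsSquare (5 : ℚ) := ⟨2 * r - 1, by rw [← h5]; ring⟩
  have : IsSquare (5 : ℤ) := by
    have := (Rat.isSquare_intCast_iff (z := 5)).mp (by exact_mod_cast hs)
    exact this
  obtain ⟨c, hc⟩ := this
  have l1 : c < 3 := by nlinarith
  have l2 : -3 < c := by nlinarith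
  interval_cases c <;> omega⟩

abbrev QF := QuadraticAlgebra ℚ 1 1

lemma rat_int_of_sq (c : ℚ) (s : ℤ) (h : c ^ 2 = s) : ∃ k : ℤ, c = k := by
  have : IsIntegral ℤ c := by
    refine ⟨Polynomial.X ^ 2 - Polynomial.C (s : ℤ), Polynomial.monic_X_pow_sub_C _ two_ne_zero, ?_⟩
    rw [Polynomial.eval₂_sub, Polynomial.eval₂_X_pow, Polynomial.eval₂_C, h]
    simp
  obtain ⟨k, hk⟩ := IsIntegrallyClosed.isIntegral_iff.mp this
  exact ⟨k, by simpa using hk.symm⟩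

lemma int_of_algebraMap (r : ℚ) (h : IsIntegral ℤ (algebraMap ℚ QF r)) : ∃ k : ℤ, r = k := by
  have h' : IsIntegral ℤ r :=
    (isIntegral_algHom_iff ((Algebra.ofId ℚ QF).restrictScalars ℤ)
      (algebraMap ℚ QF).injective).mp h
  obtain ⟨k, hk⟩ := IsIntegrallyClosed.isIntegral_iff.mp h'
  exact ⟨k, by simpa using hk.symm⟩

lemma QF_integral (z : QF) (hz : IsIntegral ℤ z) : ∃ a b : ℤ, z.re = a ∧ z.im = b := by
  have hs : IsIntegral ℤ (star z) := hz.map ((starRingEnd QF).toIntAlgHom)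
  have ht := hz.add hs
  have hn := hz.mul hs
  rw [← QuadraticAlgebra.algebraMap_trace_eq_add_star] at ht
  rw [← QuadraticAlgebra.algebraMap_norm_eq_mul_star] at hn
  obtain ⟨t, ht⟩ := int_of_algebraMap _ ht
  obtain ⟨n, hn⟩ := int_of_algebraMap _ hn
  rw [QuadraticAlgebra.trace_def] at ht
  rw [QuadraticAlgebra.norm_def] at hn
  have h5 : (5 * z.im) ^ 2 = ((5 * (t ^ 2 - 4 * n) : ℤ) : ℚ) := by
    push_cast
    rw [← ht, ← hn]; ring
  obtain ⟨c, hc⟩ := rat_int_of_sq _ _ h5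
  rw [hc] at h5
  have h6 : c ^ 2 = 5 * (t ^ 2 - 4 * n) := by exact_mod_cast h5
  have h7 : (5 : ℤ) ∣ c := by
    have hp : Prime (5 : ℤ) := by norm_num
    exact hp.dvd_of_dvd_pow ⟨_, h6⟩
  obtain ⟨b, rfl⟩ := h7
  have hb : z.im = b := by push_cast at hc; linarith
  have h8 : 5 * b ^ 2 = t ^ 2 - 4 * n := by nlinarith
  have h9 : (2 : ℤ) ∣ t - b := by
    have he : Even ((t - b) * (t + b)) := ⟨2 * n + 2 * b ^ 2, by linarith⟩
    rcases Int.even_mul.mp he with h | h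
    · exact h.two_dvd
    · obtain ⟨k, hk⟩ := h.two_dvd
      exact ⟨k - b, by linarith⟩
  obtain ⟨a, ha⟩ := h9
  refine ⟨a, b, ?_, hb⟩
  have : (t : ℚ) - b = 2 * a := by exact_mod_cast ha
  rw [hb] at ht
  linarith

lemma exists_equiv (K : Type*) [Field K] [NumberField K]
    (hdeg : Module.finrank ℚ K = 2) (hsqrt : ∃ x : K, x ^ 2 = 5) :
    Nonempty (QQ ≃ₐ[ℤ] NumberField.RingOfIntegers K) := by
  obtain ⟨x, hx⟩ := hsqrt
  set w : K := (1 + x) / 2 with hw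
  have hww : w * w = w + 1 := by
    rw [hw]; linear_combination hx / 4
  have hwi : IsIntegral ℤ w := by
    refine ⟨Polynomial.X ^ 2 - Polynomial.X - 1, by monicity!, ?_⟩
    simp; linear_combination hww
  let W0 : NumberField.RingOfIntegers K := ⟨w, hwi⟩
  have hW0 : W0 * W0 = W0 + 1 := by
    ext; exact hww
  let F : QF →ₐ[ℚ] K := QuadraticAlgebra.lift ⟨w, by simp [hww, add_comm]⟩
  let G : QQ →ₐ[ℤ] NumberField.RingOfIntegers K :=
    QuadraticAlgebra.lift ⟨W0, by simp [hW0, add_comm]⟩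
  have hF : ∀ z : QF, F z = (z.re : K) + z.im * w := fun z => by
    change z.re • (1 : K) + z.im • w = _
    simp [Algebra.smul_def]
  have hG : ∀ z : QQ, ((G z : NumberField.RingOfIntegers K) : K) = (z.re : K) + z.im * w := fun z => by
    change algebraMap (NumberField.RingOfIntegers K) K
      (z.re • (1 : NumberField.RingOfIntegers K) + z.im • W0) = _
    have hW0' : algebraMap (NumberField.RingOfIntegers K) K W0 = w := rfl
    rw [map_add, map_zsmul, map_zsmul, hW0', map_one]
    simp
  have Finj : Function.Injective F := F.toRingHom.injective
  have Fsurj : Function.Surjective F := by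
    have : Module.finrank ℚ QF = Module.finrank ℚ K := by
      rw [hdeg, QuadraticAlgebra.finrank_eq_two]
    exact (LinearMap.injective_iff_surjective_of_finrank_eq_finrank this (f := F.toLinearMap)).mp Finj
  refine ⟨AlgEquiv.ofBijective G ⟨fun z z' h => ?_, fun y => ?_⟩⟩
  · have h2 : F ⟨z.re, z.im⟩ = F ⟨z'.re, z'.im⟩ := by
      rw [hF, hF]
      have := congrArg (fun t : NumberField.RingOfIntegers K => (t : K)) h
      simp only [hG] at this
      simpa using this
    have h3 := Finj h2
    have h4 : (z.re : ℚ) = z'.re := congrArg QuadraticAlgebra.re h3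
    have h5 : (z.im : ℚ) = z'.im := congrArg QuadraticAlgebra.im h3
    ext
    · exact_mod_cast h4
    · exact_mod_cast h5
  · obtain ⟨z, hz⟩ := Fsurj y
    have hzi : IsIntegral ℤ z := by
      apply (isIntegral_algHom_iff (F.restrictScalars ℤ) Finj).mp
      change IsIntegral ℤ (F z)
      rw [hz]; exact y.2
    obtain ⟨a, b, ha, hb⟩ := QF_integral z hzi
    refine ⟨⟨a, b⟩, ?_⟩
    ext
    rw [hG, ← hz, hF, ha, hb]
    simp

lemma QQ_norm (z : QQ) : Algebra.norm ℤ z = z.norm := by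
  rw [← QuadraticAlgebra.det_toLinearMap_eq_norm, Algebra.norm_apply]
  congr 1

/-- The Dedekind zeta function of `ℚ(√5)` equals `Σ_{i≥1} η_i^{−σ}` for `σ > 1`. -/
theorem dedekind_zeta_eq_sum_eta
    (K : Type*) [Field K] [NumberField K]
    (hdeg : Module.finrank ℚ K = 2) (hsqrt : ∃ x : K, x ^ 2 = 5)
    (σ : ℝ) (hσ : 1 < σ) :
    ∑' I : {I : Ideal (NumberField.RingOfIntegers K) // I ≠ ⊥},
        1 / (Nat.card (NumberField.RingOfIntegers K ⧸ (I : Ideal (NumberField.RingOfIntegers K))) : ℝ) ^ σ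
      = ∑' i : ℕ, 1 / eta (i + 1) ^ σ := by
  obtain ⟨e⟩ := exists_equiv K hdeg hsqrt
  haveI := QQ_pid
  haveI : IsPrincipalIdealRing (NumberField.RingOfIntegers K) :=
    IsPrincipalIdealRing.of_surjective (e : QQ →+* NumberField.RingOfIntegers K) e.surjective
  let T : ℕ → {I : Ideal (NumberField.RingOfIntegers K) // I ≠ ⊥} := fun i =>
    ⟨Ideal.span {e (gam i)}, by
      rw [Ne, Ideal.span_singleton_eq_bot]
      exact (map_ne_zero_iff e e.injective).mpr (gam_ne i)⟩
  have hT : Function.Bijective T := by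
    constructor
    · intro i j hij
      have h1 : Ideal.span {e (gam i)} = Ideal.span {e (gam j)} := congrArg Subtype.val hij
      have h2 := (Ideal.span_singleton_eq_span_singleton.mp h1).map e.symm
      simp only [AlgEquiv.symm_apply_apply] at h2
      exact gam_inj h2
    · rintro ⟨I, hI⟩
      obtain ⟨y, hy⟩ := (IsPrincipalIdealRing.principal I).principal
      have hy0 : y ≠ 0 := by
        rintro rfl
        apply hI
        rw [hy]; simp
      obtain ⟨i, hi⟩ := gam_surj (e.symm y) ((map_ne_zero_iff e.symm e.symm.injective).mpr hy0)
      refine ⟨i, Subtype.ext ?_⟩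
      have h2 := hi.map e
      rw [AlgEquiv.apply_symm_apply] at h2
      change Ideal.span {e (gam i)} = I
      rw [hy]
      exact Ideal.span_singleton_eq_span_singleton.mpr h2
  rw [← (Equiv.ofBijective T hT).tsum_eq]
  refine tsum_congr fun i => ?_
  have hc : Nat.card (NumberField.RingOfIntegers K ⧸
      (((Equiv.ofBijective T hT) i : {I : Ideal (NumberField.RingOfIntegers K) // I ≠ ⊥}) :
        Ideal (NumberField.RingOfIntegers K))) = (gam i).norm.natAbs := by
    change Ideal.absNorm (Ideal.span {e (gam i)}) = _
    rw [Ideal.absNorm_span_singleton, Algebra.norm_eq_of_algEquiv, QQ_norm]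
  rw [hc, eta_eq]
end
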